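/- Let G be a profinite group (a compact Hausdorff totally disconnected topological group). Then the intersection over all n ≥ 0 of the topological closures of derivedSeries G n equals the intersection of all open normal subgroups N of G such that the quotient G/N is solvable. In other words, the kernel of the projection of G onto its maximal prosolvable quotient is ⋂_{n ≥ 0} closure(derivedSeries G n). -/

import Mathlib

/-- In a profinite group `G`, the intersection of the topological closures of the terms of
the derived series equals the intersection of all open normal subgroups with solvable
quotient, i.e. the kernel of the projection onto the maximal prosolvable quotient. -/
theorem iInf_closure_derivedSeries_eq_sInf_open_normal_solvable
    {G : Type*} [Group G] [TopologicalSpace G] [IsTopologicalGroup G]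
    [CompactSpace G] [T2Space G] [TotallyDisconnectedSpace G] :
    (⨅ n : ℕ, (derivedSeries G n).topologicalClosure) =
      sInf {N : Subgroup G | IsOpen (N : Set G) ∧
        ∃ hN : N.Normal, @IsSolvable (G ⧸ N) (@QuotientGroup.Quotient.group G _ N hN)} := by
  apply le_antisymm
  · refine le_sInf ?_
    rintro N ⟨hNo, hN, hs⟩
    obtain ⟨n, hn⟩ := (Group.isSolvable_def (G ⧸ N)).mp hs
    refine (iInf_le _ n).trans ?_
    refine Subgroup.topologicalClosure_minimal _ ?_ (N.isClosed_of_isOpen hNo)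
    have h := map_derivedSeries_le_derivedSeries (QuotientGroup.mk' N) n
    rw [hn, le_bot_iff, Subgroup.map_eq_bot_iff, QuotientGroup.ker_mk'] at h
    exact h
  · refine le_iInf fun n => ?_
    intro x hx
    by_contra hxn
    have hcl : IsClosed ((derivedSeries G n).topologicalClosure : Set G) :=
      Subgroup.isClosed_topologicalClosure _
    have hU : IsOpen ((fun g : G => x * g) ⁻¹'
        ((derivedSeries G n).topologicalClosure : Set G)ᶜ) :=
      hcl.isOpen_compl.preimage (continuous_const_mul x)
    obtain ⟨H, hH⟩ := ProfiniteGrp.exist_openNormalSubgroup_sub_open_nhds_of_one hU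
      (by rw [Set.mem_preimage, mul_one]; exact hxn)
    have hDn : (derivedSeries G n).Normal := derivedSeries_normal G n
    have hHn : (H : Subgroup G).Normal := H.isNormal'
    have hN : (derivedSeries G n ⊔ (H : Subgroup G)).Normal := Subgroup.sup_normal _ _
    have hxN : x ∈ derivedSeries G n ⊔ (H : Subgroup G) := by
      refine (Subgroup.mem_sInf.mp hx) _ ⟨?_, hN, ?_⟩
      · exact Subgroup.isOpen_mono le_sup_right H.toOpenSubgroup.isOpen
      · refine (Group.isSolvable_def _).mpr ⟨n, ?_⟩
        rw [← map_derivedSeries_eq (QuotientGroup.mk'_surjective _) n,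
          Subgroup.map_eq_bot_iff, QuotientGroup.ker_mk']
        exact le_sup_left
    obtain ⟨d, hd, h, hh, rfl⟩ := Subgroup.mem_sup_of_normal_right.mp hxN
    have := hH (H.toSubgroup.inv_mem hh)
    apply this
    beta_reduce
    rw [mul_inv_cancel_right]
    exact Subgroup.le_topologicalClosure _ hd
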